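/- If w is a bounded smooth solution of Δw - (1/2) y·∇w - w/(p-1) + |w|^{p-1}w = 0 on ℝ^n, Gaussian-integrable with its derivatives, and there is a constant C such that for all test functions φ one has ∫|∇φ|²ρ + (1/(p-1))∫φ²ρ - p∫|w|^{p-1}φ²ρ + ∫φ²ρ ≥ 0 (i.e. the smallest eigenvalue of -L is ≥ -1), then w is constant. -/

import Mathlib

open MeasureTheory Real

noncomputable def lap {n : ℕ} (w : EuclideanSpace ℝ (Fin n) → ℝ)
    (y : EuclideanSpace ℝ (Fin n)) : ℝ :=
  ∑ i, fderiv ℝ (fun z => fderiv ℝ w z (EuclideanSpace.single i 1)) y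
      (EuclideanSpace.single i 1)

noncomputable def rho (n : ℕ) (y : EuclideanSpace ℝ (Fin n)) : ℝ :=
  (4 * Real.pi) ^ (-(n : ℝ) / 2) * Real.exp (-‖y‖ ^ 2 / 4)

abbrev EE (n : ℕ) := EuclideanSpace ℝ (Fin n)

lemma rho_pos' (n : ℕ) (y : EE n) : 0 < rho n y := by
  unfold rho; positivity

lemma rho_hasFDerivAt (n : ℕ) (y : EE n) :
    HasFDerivAt (rho n) ((-(1/2) * rho n y) • innerSL ℝ y) y := by
  have h1 : HasFDerivAt (fun z : EE n => ‖z‖ ^ 2) (2 • innerSL ℝ y) y :=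
    (hasStrictFDerivAt_norm_sq y).hasFDerivAt
  have h2 := ((h1.const_mul (-(1/4 : ℝ))).exp).const_mul ((4 * Real.pi) ^ (-(n : ℝ) / 2))
  have e : rho n = fun z : EE n => (4 * Real.pi) ^ (-(n : ℝ) / 2) *
      Real.exp (-(1/4 : ℝ) * ‖z‖ ^ 2) := by
    funext z; unfold rho; congr 2; ring
  rw [e]
  refine h2.congr_fderiv ?_
  ext v
  simp
  ring

lemma rho_cont (n : ℕ) : Continuous (rho n) := by
  unfold rho; fun_prop

lemma integrable_gauss (n : ℕ) (b : ℝ) (hb : 0 < b) :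
    Integrable (fun y : EE n => Real.exp (-b * ‖y‖ ^ 2)) := by
  have h := GaussianFourier.integrable_cexp_neg_mul_sq_norm_add (V := EE n) (b := (b : ℂ))
    (by simpa using hb) 0 0
  have h2 := h.re
  refine h2.congr (Filter.Eventually.of_forall fun y => ?_)
  have : (-(b : ℂ) * (‖y‖ : ℂ) ^ 2 + 0 * ((inner ℝ (0 : EE n) y : ℝ) : ℂ))
      = ((-b * ‖y‖ ^ 2 : ℝ) : ℂ) := by push_cast; ring
  simp only [this, ← Complex.ofReal_exp]
  exact Complex.ofReal_re _

lemma rho_int_lin (n : ℕ) : Integrable (fun y : EE n => (1 + ‖y‖) * rho n y) := by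
  have h := (integrable_gauss n (1/8) (by norm_num)).const_mul (3 * (4 * Real.pi) ^ (-(n : ℝ) / 2))
  refine h.mono' (by have := rho_cont n; fun_prop) (Filter.Eventually.of_forall fun y => ?_)
  have hr := rho_pos' n y
  rw [Real.norm_of_nonneg (by positivity)]
  unfold rho
  have hc : (0 : ℝ) < (4 * Real.pi) ^ (-(n : ℝ) / 2) := by positivity
  have e1 : Real.exp (-‖y‖ ^ 2 / 4) = Real.exp (-(1/8) * ‖y‖ ^ 2) * Real.exp (-(1/8) * ‖y‖ ^ 2) := by
    rw [← Real.exp_add]; congr 1; ring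
  have e2 : Real.exp ((1/8) * ‖y‖ ^ 2) * Real.exp (-(1/8) * ‖y‖ ^ 2) = 1 := by
    rw [← Real.exp_add]; simp
  have e3 := Real.add_one_le_exp ((1/8) * ‖y‖ ^ 2)
  have e4 : 1 + ‖y‖ ≤ 3 * Real.exp ((1/8) * ‖y‖ ^ 2) := by
    nlinarith [sq_nonneg (‖y‖ - 4/3)]
  have e5 : (1 + ‖y‖) * Real.exp (-(1/8) * ‖y‖ ^ 2) ≤ 3 := by
    calc _ ≤ (3 * Real.exp ((1/8) * ‖y‖ ^ 2)) * Real.exp (-(1/8) * ‖y‖ ^ 2) := by gcongr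
      _ = 3 := by rw [mul_assoc, e2, mul_one]
  rw [e1]
  calc _ = ((1 + ‖y‖) * Real.exp (-(1/8) * ‖y‖ ^ 2)) *
        ((4 * Real.pi) ^ (-(n : ℝ) / 2) * Real.exp (-(1/8) * ‖y‖ ^ 2)) := by ring
    _ ≤ 3 * ((4 * Real.pi) ^ (-(n : ℝ) / 2) * Real.exp (-(1/8) * ‖y‖ ^ 2)) := by gcongr
    _ = _ := by ring

lemma int_of_bound (n : ℕ) (F : EE n → ℝ) (hF : Continuous F) (C : ℝ)
    (h : ∀ y, |F y| ≤ C * (1 + ‖y‖)) : Integrable (fun y => F y * rho n y) := by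
  refine ((rho_int_lin n).const_mul C).mono' (by have := rho_cont n; fun_prop)
    (Filter.Eventually.of_forall fun y => ?_)
  have hr := rho_pos' n y
  rw [norm_mul, Real.norm_of_nonneg hr.le, Real.norm_eq_abs, ← mul_assoc]
  gcongr
  exact h y

lemma rho_int (n : ℕ) : Integrable (rho n) := by
  simpa using int_of_bound n (fun _ => 1) continuous_const 1 (fun y => by
    have := norm_nonneg y
    simp)

lemma norm_sq_dual (n : ℕ) (l : EE n →L[ℝ] ℝ) :
    ‖l‖ ^ 2 = ∑ i, (l (EuclideanSpace.single i 1)) ^ 2 := by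
  have := (EuclideanSpace.basisFun (Fin n) ℝ).norm_dual l
  rw [this]
  simp

lemma apply_sum (n : ℕ) (l : EE n →L[ℝ] ℝ) (y : EE n) :
    l y = ∑ i, y i * l (EuclideanSpace.single i 1) := by
  conv_lhs => rw [← (EuclideanSpace.basisFun (Fin n) ℝ).sum_repr y]
  simp

lemma energy (n : ℕ) (w : EE n → ℝ) (hs : ContDiff ℝ (⊤ : ℕ∞) w) (M : ℝ)
    (hM : ∀ y, |w y| ≤ M ∧ ‖fderiv ℝ w y‖ ≤ M ∧ ‖fderiv ℝ (fderiv ℝ w) y‖ ≤ M) :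
    ∫ y, w y * (lap w y - (1 / 2) * fderiv ℝ w y y) * rho n y
      = - ∫ y, ‖fderiv ℝ w y‖ ^ 2 * rho n y := by
  have hM0 : 0 ≤ M := (abs_nonneg _).trans (hM 0).1
  have hd1 : ContDiff ℝ (⊤ : ℕ∞) (fderiv ℝ w) := hs.fderiv_right (by simp)
  have hd2 : ContDiff ℝ (⊤ : ℕ∞) (fderiv ℝ (fderiv ℝ w)) := hd1.fderiv_right (by simp)
  have c0 := hs.continuous
  have c1 := hd1.continuous
  have c2 := hd2.continuous
  let e : Fin n → EE n := fun i => EuclideanSpace.single i 1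
  have he : ∀ i, ‖e i‖ = 1 := fun i => by simp [e]
  have b1 : ∀ i y, |fderiv ℝ w y (e i)| ≤ M := fun i y => by
    have := (fderiv ℝ w y).le_opNorm (e i)
    rw [he, mul_one] at this
    exact this.trans (hM y).2.1
  have b2 : ∀ i y, |fderiv ℝ (fderiv ℝ w) y (e i) (e i)| ≤ M := fun i y => by
    have := (fderiv ℝ (fderiv ℝ w) y).le_opNorm₂ (e i) (e i)
    rw [he, mul_one, mul_one] at this
    exact this.trans (hM y).2.2
  have hdd : ∀ i y, HasFDerivAt (fun z => fderiv ℝ w z (e i))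
      ((fderiv ℝ (fderiv ℝ w) y).flip (e i)) y := fun i y => by
    have h := (hd1.differentiable (by simp) y).hasFDerivAt
    have := h.clm_apply (hasFDerivAt_const (e i) y)
    refine this.congr_fderiv ?_
    ext v; simp
  have hg : ∀ i y, HasFDerivAt (fun z => fderiv ℝ w z (e i) * rho n z) 
      (fderiv ℝ w y (e i) • ((-(1/2) * rho n y) • innerSL ℝ y)
        + rho n y • ((fderiv ℝ (fderiv ℝ w) y).flip (e i))) y := fun i y =>
    (hdd i y).mul (rho_hasFDerivAt n y)
  have hg' : ∀ i y, fderiv ℝ (fun z => fderiv ℝ w z (e i) * rho n z) y (e i)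
      = (fderiv ℝ (fderiv ℝ w) y (e i) (e i) - (1/2) * (y i * fderiv ℝ w y (e i))) * rho n y := by
    intro i y
    rw [(hg i y).fderiv]
    simp [e, EuclideanSpace.inner_single_right]
    ring
  have yb : ∀ i (y : EE n), |y i| ≤ ‖y‖ := fun i y => by
    simpa using PiLp.norm_apply_le y i
  have I1 : ∀ i, Integrable (fun y => (fderiv ℝ w y (e i)) ^ 2 * rho n y) := fun i => by
    refine int_of_bound n _ (by fun_prop) (M ^ 2) fun y => ?_
    rw [abs_pow]
    have := pow_le_pow_left₀ (abs_nonneg _) (b1 i y) 2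
    nlinarith [norm_nonneg y, sq_nonneg M, mul_nonneg (sq_nonneg M) (norm_nonneg y)]
  have I2 : ∀ i, Integrable (fun y => w y * (fderiv ℝ (fderiv ℝ w) y (e i) (e i)
      - (1/2) * (y i * fderiv ℝ w y (e i))) * rho n y) := fun i => by
    refine int_of_bound n _ (by fun_prop) (M * M) fun y => ?_
    rw [abs_mul, mul_assoc]
    refine mul_le_mul (hM y).1 ?_ (abs_nonneg _) hM0
    refine (abs_sub _ _).trans ?_
    rw [abs_mul, abs_mul]
    have := mul_le_mul (yb i y) (b1 i y) (abs_nonneg _) (norm_nonneg _)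
    have := b2 i y
    have : |(1/2 : ℝ)| = 1/2 := by norm_num
    rw [this]
    nlinarith [mul_nonneg hM0 (norm_nonneg y)]
  have I3 : ∀ i, Integrable (fun y => w y * fderiv ℝ w y (e i) * rho n y) := fun i => by
    refine int_of_bound n _ (by fun_prop) (M * M) fun y => ?_
    rw [abs_mul]
    have := mul_le_mul (hM y).1 (b1 i y) (abs_nonneg _) hM0
    nlinarith [mul_nonneg (mul_nonneg hM0 hM0) (norm_nonneg y)]
  have key : ∀ i, ∫ y, w y * (fderiv ℝ (fderiv ℝ w) y (e i) (e i)
      - (1/2) * (y i * fderiv ℝ w y (e i))) * rho n y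
      = - ∫ y, (fderiv ℝ w y (e i)) ^ 2 * rho n y := fun i => by
    have := integral_mul_fderiv_eq_neg_fderiv_mul_of_integrable (μ := (volume : Measure (EE n)))
      (f := w) (g := fun z => fderiv ℝ w z (e i) * rho n z) (v := e i)
      ((I1 i).congr (Filter.Eventually.of_forall fun y => by simp only []; ring))
      ((I2 i).congr (Filter.Eventually.of_forall fun y => by simp only [hg']; ring))
      ((I3 i).congr (Filter.Eventually.of_forall fun y => by simp only []; ring))
      (fun x _ => hs.differentiable (by simp) x)
      (fun x _ => (hg i x).differentiableAt)
    simp only [hg'] at this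
    convert! this using 2
    · funext y; ring
    · congr 1; funext y; ring
  have l : ∀ y, w y * (lap w y - (1 / 2) * fderiv ℝ w y y) * rho n y
      = ∑ i, w y * (fderiv ℝ (fderiv ℝ w) y (e i) (e i)
      - (1/2) * (y i * fderiv ℝ w y (e i))) * rho n y := fun y => by
    rw [← Finset.sum_mul, ← Finset.mul_sum, Finset.sum_sub_distrib, ← Finset.mul_sum,
      apply_sum n (fderiv ℝ w y) y]
    congr 3
    unfold lap
    refine Finset.sum_congr rfl fun i _ => ?_
    have := (hdd i y).fderiv
    simp only [e] at this ⊢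
    rw [this]; rfl
  simp_rw [l, norm_sq_dual, Finset.sum_mul]
  rw [integral_finsetSum _ (fun i _ => I2 i), integral_finsetSum _ (fun i _ => I1 i),
    ← Finset.sum_neg_distrib]
  exact Finset.sum_congr rfl fun i _ => key i

lemma cutoff (n : ℕ) : ∃ (χ : ℕ → EE n → ℝ) (C : ℝ), (∀ k, ContDiff ℝ (⊤ : ℕ∞) (χ k)) ∧
    (∀ k, HasCompactSupport (χ k)) ∧ (∀ k y, |χ k y| ≤ 1) ∧ (∀ k y, ‖fderiv ℝ (χ k) y‖ ≤ C) ∧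
    ∀ y, ∀ᶠ k in Filter.atTop, χ k =ᶠ[nhds y] fun _ => 1 := by
  let f : ContDiffBump (0 : EE n) := ⟨1, 2, one_pos, one_lt_two⟩
  have hf : ContDiff ℝ (⊤ : ℕ∞) (f : EE n → ℝ) := f.contDiff
  obtain ⟨C, hC⟩ := (f.hasCompactSupport.fderiv (𝕜 := ℝ)).exists_bound_of_continuous
    (hf.continuous_fderiv (by simp))
  refine ⟨fun k y => f (((k : ℝ) + 1)⁻¹ • y), C, fun k => by fun_prop, fun k => ?_, fun k y => ?_,
    fun k y => ?_, fun y => ?_⟩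
  · exact f.hasCompactSupport.comp_smul (by positivity)
  · rw [abs_of_nonneg f.nonneg]; exact f.le_one
  · have := fderiv_comp_smul (𝕜 := ℝ) (f := (f : EE n → ℝ)) (x := y) (((k : ℝ) + 1)⁻¹)
    rw [this, norm_smul, Real.norm_of_nonneg (by positivity)]
    have h1 : ((k : ℝ) + 1)⁻¹ ≤ 1 := inv_le_one_of_one_le₀ (by simp)
    calc _ ≤ 1 * ‖fderiv ℝ (f : EE n → ℝ) (((k : ℝ) + 1)⁻¹ • y)‖ := by gcongr
      _ ≤ C := by rw [one_mul]; exact hC _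
  · obtain ⟨K, hK⟩ := exists_nat_gt ‖y‖
    filter_upwards [Filter.eventually_ge_atTop K] with k hk
    have hlt : ‖y‖ < (k : ℝ) := hK.trans_le (by exact_mod_cast hk)
    filter_upwards [(isOpen_lt continuous_norm continuous_const).mem_nhds hlt] with z hz
    have hz' : ‖z‖ < (k : ℝ) := hz
    apply f.one_of_mem_closedBall
    rw [mem_closedBall_zero_iff, norm_smul, Real.norm_of_nonneg (by positivity)]
    change _ ≤ (1 : ℝ)
    rw [inv_mul_le_iff₀ (by positivity)]
    linarith

lemma lim_int (n : ℕ) (F : ℕ → EE n → ℝ) (G : EE n → ℝ) (C : ℝ)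
    (hF : ∀ k, Continuous (F k)) (hb : ∀ k y, |F k y| ≤ C)
    (h : ∀ y, ∀ᶠ k in Filter.atTop, F k y = G y) :
    Filter.Tendsto (fun k => ∫ y, F k y * rho n y) Filter.atTop
      (nhds (∫ y, G y * rho n y)) := by
  refine tendsto_integral_of_dominated_convergence (fun y => C * rho n y)
    (fun k => ((hF k).mul (rho_cont n)).aestronglyMeasurable) ((rho_int n).const_mul C)
    (fun k => Filter.Eventually.of_forall fun y => ?_) (Filter.Eventually.of_forall fun y => ?_)
  · have hr := rho_pos' n y
    rw [norm_mul, Real.norm_of_nonneg hr.le, Real.norm_eq_abs]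
    gcongr
    exact hb k y
  · refine tendsto_const_nhds.congr' ?_
    filter_upwards [h y] with k hk
    rw [hk]

/-- If the smallest eigenvalue of `-L` is `≥ -1` (i.e. the shifted quadratic
form is nonnegative on all test functions), then the bounded smooth solution
`w` of the self-similar equation is constant. -/
theorem constant_of_spectral_bound
    (n : ℕ) (p : ℝ) (hp : 1 < p) (w : EuclideanSpace ℝ (Fin n) → ℝ)
    (hsmooth : ContDiff ℝ (⊤ : ℕ∞) w)
    (hbd : ∃ M : ℝ, ∀ y, |w y| ≤ M ∧ ‖fderiv ℝ w y‖ ≤ M ∧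
        ‖fderiv ℝ (fderiv ℝ w) y‖ ≤ M)
    (heq : ∀ y, lap w y - (1 / 2) * fderiv ℝ w y y - w y / (p - 1)
        + |w y| ^ (p - 1) * w y = 0)
    (hint1 : Integrable (fun y => ‖fderiv ℝ w y‖ ^ 2 * rho n y))
    (hint2 : Integrable (fun y => (w y) ^ 2 * rho n y))
    (hint3 : Integrable (fun y => |w y| ^ (p + 1) * rho n y))
    (hstab : ∀ φ : EuclideanSpace ℝ (Fin n) → ℝ, ContDiff ℝ (⊤ : ℕ∞) φ →
      HasCompactSupport φ →
      0 ≤ (∫ y, ‖fderiv ℝ φ y‖ ^ 2 * rho n y)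
          + (1 / (p - 1)) * (∫ y, (φ y) ^ 2 * rho n y)
          - p * (∫ y, |w y| ^ (p - 1) * (φ y) ^ 2 * rho n y)
          + (∫ y, (φ y) ^ 2 * rho n y)) :
    ∀ y z : EuclideanSpace ℝ (Fin n), w y = w z := by
  obtain ⟨M, hM⟩ := hbd
  have hM0 : 0 ≤ M := (abs_nonneg _).trans (hM 0).1
  have hp1 : 0 < p - 1 := by linarith
  have c0 := hsmooth.continuous
  have c1 : Continuous (fderiv ℝ w) := hsmooth.continuous_fderiv (by simp)
  have cp : Continuous fun y => |w y| ^ (p - 1) :=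
    c0.abs.rpow_const fun _ => Or.inr hp1.le
  have hpow : ∀ y, |w y| ^ (p - 1) * (w y) ^ 2 = |w y| ^ (p + 1) := fun y => by
    have h2 : |w y| ^ (2 : ℝ) = (w y) ^ 2 := by
      rw [Real.rpow_two, sq_abs]
    rw [← h2, ← Real.rpow_add_of_nonneg (abs_nonneg _) hp1.le (by norm_num)]
    congr 1; ring
  -- energy identity
  have hE := energy n w hsmooth M hM
  have hE2 : ∫ y, w y * (lap w y - (1 / 2) * fderiv ℝ w y y) * rho n y
      = (1 / (p - 1)) * (∫ y, (w y) ^ 2 * rho n y) - ∫ y, |w y| ^ (p + 1) * rho n y := by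
    rw [← integral_const_mul, ← integral_sub (hint2.const_mul _) hint3]
    congr 1; funext y
    have h := heq y
    have h' : lap w y - (1 / 2) * fderiv ℝ w y y = w y / (p - 1) - |w y| ^ (p - 1) * w y := by
      linarith
    rw [h', ← hpow]
    ring
  -- stability tested with w
  obtain ⟨χ, C, hχs, hχc, hχb, hχd, hχ1⟩ := cutoff n
  have hC0 : 0 ≤ C := (norm_nonneg _).trans (hχd 0 0)
  have hφs : ∀ k, ContDiff ℝ (⊤ : ℕ∞) (fun y => χ k y * w y) := fun k => (hχs k).mul hsmooth
  have hφb : ∀ k y, |χ k y * w y| ≤ M := fun k y => by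
    rw [abs_mul]
    nlinarith [hχb k y, (hM y).1, abs_nonneg (χ k y), abs_nonneg (w y)]
  have hφ1 : ∀ y, ∀ᶠ k in Filter.atTop, (fun z => χ k z * w z) =ᶠ[nhds y] w := fun y => by
    filter_upwards [hχ1 y] with k hk
    filter_upwards [hk] with z hz
    rw [hz, one_mul]
  have hφd : ∀ k y, ‖fderiv ℝ (fun z => χ k z * w z) y‖ ≤ M + M * C := fun k y => by
    have h := (((hχs k).differentiable (by simp) y).hasFDerivAt.mul
      (hsmooth.differentiable (by simp) y).hasFDerivAt).fderiv
    change fderiv ℝ (fun z => χ k z * w z) y = _ at h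
    rw [h]
    refine (norm_add_le _ _).trans ?_
    rw [norm_smul, norm_smul, Real.norm_eq_abs, Real.norm_eq_abs]
    have a1 := mul_le_mul (hχb k y) (hM y).2.1 (norm_nonneg _) zero_le_one
    have a2 := mul_le_mul (hM y).1 (hχd k y) (norm_nonneg _) hM0
    linarith
  have L1 := lim_int n (fun k y => ‖fderiv ℝ (fun z => χ k z * w z) y‖ ^ 2)
    (fun y => ‖fderiv ℝ w y‖ ^ 2) ((M + M * C) ^ 2)
    (fun k => by have := (hφs k).continuous_fderiv (by simp); fun_prop)
    (fun k y => by
      rw [abs_of_nonneg (by positivity)]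
      exact pow_le_pow_left₀ (norm_nonneg _) (hφd k y) 2)
    (fun y => by
      filter_upwards [hφ1 y] with k hk
      rw [hk.fderiv_eq])
  have hsq : ∀ k y, (χ k y * w y) ^ 2 ≤ M ^ 2 := fun k y => by
    rw [← sq_abs]
    exact pow_le_pow_left₀ (abs_nonneg _) (hφb k y) 2
  have L2 := lim_int n (fun k y => (χ k y * w y) ^ 2)
    (fun y => (w y) ^ 2) (M ^ 2)
    (fun k => by have := (hφs k).continuous; fun_prop)
    (fun k y => by
      rw [abs_of_nonneg (by positivity)]
      exact hsq k y)
    (fun y => by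
      filter_upwards [hφ1 y] with k hk
      rw [hk.eq_of_nhds])
  have L3 := lim_int n (fun k y => |w y| ^ (p - 1) * (χ k y * w y) ^ 2)
    (fun y => |w y| ^ (p + 1)) (M ^ (p - 1) * M ^ 2)
    (fun k => by have := (hφs k).continuous; fun_prop)
    (fun k y => by
      rw [abs_of_nonneg (by positivity)]
      exact mul_le_mul (Real.rpow_le_rpow (abs_nonneg _) (hM y).1 hp1.le) (hsq k y)
        (by positivity) (by positivity))
    (fun y => by
      filter_upwards [hφ1 y] with k hk
      rw [hk.eq_of_nhds, hpow])
  have hS := ge_of_tendsto' (((L1.add (L2.const_mul (1 / (p - 1)))).sub (L3.const_mul p)).add L2)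
    (fun k => hstab _ (hφs k) ((hχc k).mul_right))
  -- combine
  have hA0 : 0 ≤ ∫ y, ‖fderiv ℝ w y‖ ^ 2 * rho n y := integral_nonneg fun y => by
    have := rho_pos' n y
    positivity
  have hA : ∫ y, ‖fderiv ℝ w y‖ ^ 2 * rho n y = 0 := by
    rw [hE] at hE2
    generalize (∫ y, ‖fderiv ℝ w y‖ ^ 2 * rho n y) = A at *
    generalize (∫ y, (w y) ^ 2 * rho n y) = B at *
    generalize (∫ y, |w y| ^ (p + 1) * rho n y) = D at *
    have hD : D = A + 1 / (p - 1) * B := by linarith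
    subst hD
    have e : (p - 1) * (1 / (p - 1) * B) = B := by field_simp
    nlinarith
  rw [integral_eq_zero_iff_of_nonneg (fun y => by
    have := rho_pos' n y
    simp only [Pi.zero_apply]
    positivity) hint1] at hA
  have hz := Continuous.ae_eq_iff_eq volume ((c1.norm.pow 2).mul (rho_cont n))
    (continuous_const (y := (0 : ℝ))) |>.1 hA
  refine is_const_of_fderiv_eq_zero (𝕜 := ℝ) (hsmooth.differentiable (by simp)) fun y => ?_
  have h := congrFun hz y
  have hr := (rho_pos' n y).ne'
  simpa [hr] using h
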